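/- For all real numbers a, b, c ≥ 1: (a+b+c)/3 + (abc)^(1/3) − (2/3)·(√(ab) + √(bc) + √(ca)) ≥ (1/36)·((log(a/b))² + (log(b/c))² + (log(c/a))²). -/

import Mathlib

/-- Popoviciu's inequality when `x` and `y` lie on the same side of the mean `m`. -/
theorem ConvexOn.popoviciu_of_same_side {s : Set ℝ} {f : ℝ → ℝ} (hf : ConvexOn ℝ s f)
    {x y z m : ℝ} (hx : x ∈ s) (hy : y ∈ s) (hz : z ∈ s) (hm : m ∈ s)
    (hsum : x + y + z = 3 * m) (hside : 0 ≤ (m - x) * (m - y)) :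
    2 * (f ((x + y) / 2) + f ((y + z) / 2) + f ((z + x) / 2)) ≤ f x + f y + f z + 3 * f m := by
  have hxy : f ((x + y) / 2) ≤ (f x + f y) / 2 := by
    have h := hf.2 hx hy (show (0 : ℝ) ≤ 1 / 2 by norm_num) (show (0 : ℝ) ≤ 1 / 2 by norm_num)
      (by norm_num)
    simp only [smul_eq_mul] at h
    rw [show (x + y) / 2 = 1 / 2 * x + 1 / 2 * y by ring]
    linarith
  suffices h : f ((y + z) / 2) + f ((z + x) / 2) ≤ (f z + 3 * f m) / 2 by linarith
  obtain hd | hd := eq_or_ne ((m - x) + (m - y)) 0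
  · have hsq : (m - x) ^ 2 ≤ 0 := by
      rw [show m - y = -(m - x) by linarith] at hside
      nlinarith
    have hxm : m - x = 0 := pow_eq_zero_iff two_ne_zero |>.1 (le_antisymm hsq (sq_nonneg _))
    obtain rfl : x = m := by linarith
    obtain rfl : y = x := by linarith
    obtain rfl : z = y := by linarith
    rw [show (z + z) / 2 = z by ring]
    linarith
  · -- Points of the form `m + w / 2`, with `w` a part of `z - m`, lie between `m` and `z`.
    have key : ∀ w, 0 ≤ w / ((m - x) + (m - y)) → w / ((m - x) + (m - y)) ≤ 1 →
        f (m + w / 2) ≤ f m + w / ((m - x) + (m - y)) / 2 * (f z - f m) := by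
      intro w h0 h1
      have h := hf.2 hm hz (show 0 ≤ 1 - w / ((m - x) + (m - y)) / 2 by linarith)
        (show 0 ≤ w / ((m - x) + (m - y)) / 2 by linarith) (by ring)
      simp only [smul_eq_mul] at h
      have hw : (1 - w / ((m - x) + (m - y)) / 2) * m + w / ((m - x) + (m - y)) / 2 * z
          = m + w / 2 := by
        rw [show z = m + ((m - x) + (m - y)) by linarith]
        generalize (m - x) + (m - y) = d at hd
        field_simp
        ring
      rw [hw] at h
      linarith
    have hadd : (m - x) / ((m - x) + (m - y)) + (m - y) / ((m - x) + (m - y)) = 1 := by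
      rw [← add_div, div_self hd]
    have hx0 : 0 ≤ (m - x) / ((m - x) + (m - y)) := by
      rw [← mul_div_mul_right _ _ hd]
      exact div_nonneg (by nlinarith [sq_nonneg (m - x)]) (mul_self_nonneg _)
    have hy0 : 0 ≤ (m - y) / ((m - x) + (m - y)) := by
      rw [← mul_div_mul_right _ _ hd]
      exact div_nonneg (by nlinarith [sq_nonneg (m - y)]) (mul_self_nonneg _)
    have h₁ := key (m - x) hx0 (by linarith)
    have h₂ := key (m - y) hy0 (by linarith)
    rw [show (y + z) / 2 = m + (m - x) / 2 by linarith,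
      show (z + x) / 2 = m + (m - y) / 2 by linarith]
    linear_combination h₁ + h₂ + (f z - f m) / 2 * hadd

/-- **Popoviciu's inequality** for a convex function. -/
theorem ConvexOn.popoviciu {s : Set ℝ} {f : ℝ → ℝ} (hf : ConvexOn ℝ s f)
    {x y z : ℝ} (hx : x ∈ s) (hy : y ∈ s) (hz : z ∈ s) :
    2 * (f ((x + y) / 2) + f ((y + z) / 2) + f ((z + x) / 2)) ≤
      f x + f y + f z + 3 * f ((x + y + z) / 3) := by
  have hm : (x + y + z) / 3 ∈ s := by
    have hxy := hf.1 hx hy (show (0 : ℝ) ≤ 1 / 2 by norm_num) (show (0 : ℝ) ≤ 1 / 2 by norm_num)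
      (by norm_num)
    have h := hf.1 hxy hz (show (0 : ℝ) ≤ 2 / 3 by norm_num) (show (0 : ℝ) ≤ 1 / 3 by norm_num)
      (by norm_num)
    simp only [smul_eq_mul] at h
    convert h using 1
    ring
  have hsum : x + y + z = 3 * ((x + y + z) / 3) := by ring
  generalize (x + y + z) / 3 = m at hm hsum ⊢
  rcases le_or_gt 0 ((m - x) * (m - y)) with h | hxy
  · exact hf.popoviciu_of_same_side hx hy hz hm hsum h
  rcases le_or_gt 0 ((m - y) * (m - z)) with h | hyz
  · linarith [hf.popoviciu_of_same_side hy hz hx hm (by linarith) h]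
  · have h : 0 ≤ (m - z) * (m - x) := by
      by_contra! hzx
      nlinarith [mul_neg_of_pos_of_neg (mul_pos_of_neg_of_neg hxy hyz) hzx,
        sq_nonneg ((m - x) * (m - y) * (m - z))]
    linarith [hf.popoviciu_of_same_side hz hx hy hm (by linarith) h]

theorem convexOn_exp_sub_sq_div_two :
    ConvexOn ℝ (Set.Ici 0) fun x : ℝ ↦ Real.exp x - x ^ 2 / 2 := by
  have h₁ : ∀ x : ℝ, HasDerivAt (fun x : ℝ ↦ Real.exp x - x ^ 2 / 2) (Real.exp x - x) x := by
    intro x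
    refine ((Real.hasDerivAt_exp x).sub ((hasDerivAt_pow 2 x).div_const 2)).congr_deriv ?_
    norm_num
  have h₂ : ∀ x : ℝ, HasDerivAt (fun x : ℝ ↦ Real.exp x - x) (Real.exp x - 1) x :=
    fun x ↦ (Real.hasDerivAt_exp x).sub (hasDerivAt_id x)
  refine convexOn_of_hasDerivWithinAt2_nonneg (convex_Ici 0) (by fun_prop)
    (fun x _ ↦ (h₁ x).hasDerivWithinAt) (fun x _ ↦ (h₂ x).hasDerivWithinAt) fun x hx ↦ ?_
  rw [interior_Ici, Set.mem_Ioi] at hx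
  linarith [Real.one_le_exp hx.le]

/-- For `a, b, c ≥ 1`:
`(a+b+c)/3 + (abc)^(1/3) − (2/3)(√(ab)+√(bc)+√(ca)) ≥ (1/36)(log²(a/b)+log²(b/c)+log²(c/a))`. -/
theorem popoviciu_exp_application (a b c : ℝ) (ha : 1 ≤ a) (hb : 1 ≤ b) (hc : 1 ≤ c) :
    (a + b + c) / 3 + (a * b * c) ^ ((1 : ℝ) / 3) -
        (2 / 3) * (Real.sqrt (a * b) + Real.sqrt (b * c) + Real.sqrt (c * a)) ≥
      (1 / 36) * ((Real.log (a / b)) ^ 2 + (Real.log (b / c)) ^ 2 + (Real.log (c / a)) ^ 2) := by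
  obtain ⟨x, hx, rfl⟩ : ∃ x, 0 ≤ x ∧ Real.exp x = a :=
    ⟨Real.log a, Real.log_nonneg ha, Real.exp_log (by linarith)⟩
  obtain ⟨y, hy, rfl⟩ : ∃ y, 0 ≤ y ∧ Real.exp y = b :=
    ⟨Real.log b, Real.log_nonneg hb, Real.exp_log (by linarith)⟩
  obtain ⟨z, hz, rfl⟩ : ∃ z, 0 ≤ z ∧ Real.exp z = c :=
    ⟨Real.log c, Real.log_nonneg hc, Real.exp_log (by linarith)⟩
  have h := convexOn_exp_sub_sq_div_two.popoviciu hx hy hz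
  simp only [← Real.exp_add, ← Real.exp_sub, Real.log_exp, ← Real.exp_half, ← Real.exp_mul]
  rw [mul_one_div]
  linear_combination h / 3
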